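/- arXiv:1907.04997 — 2 statements merged into one kernel-verified Lean document; each statement's English description precedes it below -/
import Mathlib

section
/- Let n ≥ 1 be an integer, let τ > 0 be a real number, and let f : ℝ → ℝ satisfy: f(t) > 0 for all t ∈ [0, τ), f(τ) ≥ 0, the function t ↦ f(t)^{1/n} is concave on the interval [0, τ], and f is differentiable at every point of (0, τ). If x ∈ (0, τ) and f'(x) < 0, then τ ≤ x + n·f(x)/(−f'(x)). -/
theorem stmt_1 (n : ℕ) (hn : 1 ≤ n) (τ : ℝ) (hτ : 0 < τ) (f : ℝ → ℝ)
    (hpos : ∀ t ∈ Set.Ico (0:ℝ) τ, 0 < f t)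
    (hτ0 : 0 ≤ f τ)
    (hconc : ConcaveOn ℝ (Set.Icc 0 τ) (fun t => f t ^ ((1:ℝ) / n)))
    (hdiff : ∀ t ∈ Set.Ioo (0:ℝ) τ, DifferentiableAt ℝ f t)
    (x : ℝ) (hx : x ∈ Set.Ioo (0:ℝ) τ) (hx' : deriv f x < 0) :
    τ ≤ x + n * f x / (-(deriv f x)) := by
  have hfx : 0 < f x := hpos x ⟨hx.1.le, hx.2⟩
  have hd := (hdiff x hx).hasDerivAt.rpow_const (p := (1:ℝ) / n) (Or.inl hfx.ne')
  have h := hconc.slope_le_of_hasDerivAt ⟨hx.1.le, hx.2.le⟩ ⟨hτ.le, le_rfl⟩ hx.2 hd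
  have hxt : 0 < τ - x := sub_pos.2 hx.2
  have hn0 : (0:ℝ) < n := by exact_mod_cast hn
  rw [slope_def_field, div_le_iff₀ hxt, Real.rpow_sub_one hfx.ne'] at h
  have hg : 0 < f x ^ ((1:ℝ) / n) := Real.rpow_pos_of_pos hfx _
  have hgt : 0 ≤ f τ ^ ((1:ℝ) / n) := Real.rpow_nonneg hτ0 _
  generalize f x ^ ((1:ℝ) / n) = g at h hg
  generalize f τ ^ ((1:ℝ) / n) = k at h hgt
  have e : deriv f x * (1 / n) * (g / f x) * (τ - x)
      = g * (deriv f x * (τ - x) / (n * f x)) := by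
    field_simp
  rw [e] at h
  have h2 : -1 ≤ deriv f x * (τ - x) / (n * f x) := by
    by_contra hc
    push Not at hc
    nlinarith
  rw [le_div_iff₀ (by positivity)] at h2
  have h3 : τ - x ≤ n * f x / (-(deriv f x)) := by
    rw [le_div_iff₀ (by linarith)]
    linarith
  linarith
end

section
/- Let V, f₀, A, ε, τ, c₀ be real numbers with V > 0, f₀ > 0, A > 0, 0 < ε < τ, and suppose that V − ε²/f₀ = c₀·(τ − ε)² and ε/f₀ = c₀·(τ − ε). Then ε·τ = f₀·V, and 1 − ( ∫₀^ε (V − x²/f₀) dx + ∫_ε^τ c₀·(τ − x)² dx ) / (A·V) = 1 − (ε + τ)/(3A). -/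
theorem stmt_2 (V f₀ A ε τ c₀ : ℝ) (hV : 0 < V) (hf₀ : 0 < f₀) (hA : 0 < A)
    (hε : 0 < ε) (hετ : ε < τ)
    (h1 : V - ε ^ 2 / f₀ = c₀ * (τ - ε) ^ 2)
    (h2 : ε / f₀ = c₀ * (τ - ε)) :
    ε * τ = f₀ * V ∧
      1 - ((∫ x in (0:ℝ)..ε, (V - x ^ 2 / f₀)) + ∫ x in ε..τ, c₀ * (τ - x) ^ 2) / (A * V)
        = 1 - (ε + τ) / (3 * A) := by
  have hVe : V = ε * τ / f₀ := by
    have h3 : c₀ * (τ - ε) ^ 2 = ε / f₀ * (τ - ε) := by rw [h2]; ring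
    have h4 : V = ε ^ 2 / f₀ + ε / f₀ * (τ - ε) := by linarith
    rw [h4]; ring
  have key : ε * τ = f₀ * V := by rw [hVe]; field_simp
  refine ⟨key, ?_⟩
  have i1 : (∫ x in (0:ℝ)..ε, (V - x ^ 2 / f₀)) = V * ε - ε ^ 3 / 3 / f₀ := by
    rw [intervalIntegral.integral_sub (Continuous.intervalIntegrable (by fun_prop) _ _)
      (Continuous.intervalIntegrable (by fun_prop) _ _),
      intervalIntegral.integral_div, integral_pow, intervalIntegral.integral_const]
    norm_num
    ring
  have i2 : (∫ x in ε..τ, c₀ * (τ - x) ^ 2) = c₀ * (τ - ε) ^ 3 / 3 := by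
    rw [intervalIntegral.integral_const_mul,
      intervalIntegral.integral_comp_sub_left (fun x => x ^ 2) τ, integral_pow]
    norm_num
    ring
  have h5 : c₀ * (τ - ε) ^ 3 = ε / f₀ * (τ - ε) ^ 2 := by rw [h2]; ring
  have hs : V * ε - ε ^ 3 / 3 / f₀ + c₀ * (τ - ε) ^ 3 / 3 = V * ((ε + τ) / 3) := by
    rw [h5, hVe]; ring
  rw [i1, i2, hs]
  field_simp
end
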